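/- For every k with n − b < k ≤ n, the Leibniz identity fails at α_k: D(α_k · α_k) ≠ D(α_k) · α_k + α_k · D(α_k). Consequently DS_{a,b} = {α_0,…,α_{n−b}} is the maximal subset of STR{a,b} containing DS_{a,b} on which D is a derivation. -/

import Mathlib

/-- Pointwise-max addition on endomorphisms of the chain `Fin N`. -/
def sAdd {N : ℕ} (f g : Fin N → Fin N) : Fin N → Fin N := fun i => max (f i) (g i)

/-- Multiplication in diagram order: `(f·g)(i) = g (f i)`. -/
def sMul {N : ℕ} (f g : Fin N → Fin N) : Fin N → Fin N := fun i => g (f i)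

/-- The element `α_k` of the string `STR{a,b}`: `α_k i = a` if `i ≤ N - k - 1`
    (equivalently `i + k < N`) and `α_k i = b` otherwise. -/
def alpha {N : ℕ} (a b : Fin N) (k : ℕ) : Fin N → Fin N :=
  fun i => if (i : ℕ) + k < N then a else b

/-!
Let `n - b < k ≤ n`, so that both `α_k` and `α_{k-1}` fix `b`. If `α_k` fixes `a`, then so does
`α_{k-1}`, and `α_k·D(α_k) = α_k = α_k·α_k`; if not, `α_k` sends both `a` and `b` to `b`, and
`D(α_k)·α_k = α_n = α_k·α_k`. Either way the Leibniz sum is `α_k·α_k` itself, which is some `α_m`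
with `m ≥ 1`, whereas `D(α_m) = α_{m-1} ≠ α_m`.
-/

section Alpha

variable {n : ℕ} {a b : Fin n} {k l : ℕ}

theorem alpha_apply_of_lt {i : Fin n} (h : (i : ℕ) + k < n) : alpha a b k i = a :=
  if_pos h

theorem alpha_apply_of_le {i : Fin n} (h : n ≤ (i : ℕ) + k) : alpha a b k i = b :=
  if_neg h.not_gt

theorem alpha_zero (a b : Fin n) : alpha a b 0 = fun _ => a :=
  funext fun i => alpha_apply_of_lt i.isLt

theorem alpha_card (a b : Fin n) : alpha a b n = fun _ => b :=
  funext fun i => alpha_apply_of_le (Nat.le_add_left n i)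

theorem alpha_self (a : Fin n) (k : ℕ) : alpha a a k = fun _ => a :=
  funext fun _ => ite_self a

theorem alpha_injOn (hab : a ≠ b) : Set.InjOn (alpha a b) (Set.Iic n) := by
  have alpha_ne_of_lt {k l : ℕ} (hkl : k < l) (hl : l ≤ n) : alpha a b k ≠ alpha a b l := by
    intro h
    let i : Fin n := ⟨n - l, by omega⟩
    have hk : alpha a b k i = a := alpha_apply_of_lt (show n - l + k < n by omega)
    have hl : alpha a b l i = b := alpha_apply_of_le (show n ≤ n - l + l by omega)
    exact hab (hk.symm.trans ((congrFun h i).trans hl))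
  intro k hk l hl h
  rcases lt_trichotomy k l with hkl | rfl | hlk
  · exact absurd h (alpha_ne_of_lt hkl hl)
  · rfl
  · exact absurd h.symm (alpha_ne_of_lt hlk hk)

theorem sAdd_alpha_alpha (hab : a ≤ b) (k l : ℕ) :
    sAdd (alpha a b k) (alpha a b l) = alpha a b (max k l) := by
  funext i
  simp only [sAdd, alpha]
  split_ifs <;> first | omega | simp [hab]

theorem sMul_alpha (a b : Fin n) (k : ℕ) (f : Fin n → Fin n) :
    sMul (alpha a b k) f = alpha (f a) (f b) k :=
  funext fun _ => apply_ite f _ _ _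

theorem sMul_alpha_alpha_eq_zero (hab : a ≤ b) (k : ℕ) (hb : (b : ℕ) + l < n) :
    sMul (alpha a b k) (alpha a b l) = alpha a b 0 := by
  have ha : (a : ℕ) + l < n := (Nat.add_le_add_right hab l).trans_lt hb
  rw [sMul_alpha, alpha_apply_of_lt ha, alpha_apply_of_lt hb, alpha_self, alpha_zero]

theorem sMul_alpha_alpha_eq_left (k : ℕ) (ha : (a : ℕ) + l < n) (hb : n ≤ (b : ℕ) + l) :
    sMul (alpha a b k) (alpha a b l) = alpha a b k := by
  rw [sMul_alpha, alpha_apply_of_lt ha, alpha_apply_of_le hb]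

theorem sMul_alpha_alpha_eq_card (hab : a ≤ b) (k : ℕ) (ha : n ≤ (a : ℕ) + l) :
    sMul (alpha a b k) (alpha a b l) = alpha a b n := by
  have hb : n ≤ (b : ℕ) + l := ha.trans (Nat.add_le_add_right hab l)
  rw [sMul_alpha, alpha_apply_of_le ha, alpha_apply_of_le hb, alpha_self, alpha_card]

theorem exists_sMul_alpha_alpha_eq_alpha (hab : a ≤ b) (hk : k ≤ n) (l : ℕ) :
    ∃ m ≤ n, sMul (alpha a b k) (alpha a b l) = alpha a b m := by
  rcases lt_or_ge ((b : ℕ) + l) n with hb | hb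
  · exact ⟨0, n.zero_le, sMul_alpha_alpha_eq_zero hab k hb⟩
  rcases lt_or_ge ((a : ℕ) + l) n with ha | ha
  · exact ⟨k, hk, sMul_alpha_alpha_eq_left k ha hb⟩
  · exact ⟨n, le_rfl, sMul_alpha_alpha_eq_card hab k ha⟩

end Alpha

section Leibniz

variable {n : ℕ} {a b : Fin n} {k : ℕ}

/-- The right-hand side `D(α_k)·α_l + α_k·D(α_l)` of the Leibniz identity, where `D(α_k)` is written
`α_{k-1}`; truncated subtraction accounts for `D(α_0) = α_0`. -/
def leibnizSum (a b : Fin n) (k l : ℕ) : Fin n → Fin n :=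
  sAdd (sMul (alpha a b (k - 1)) (alpha a b l)) (sMul (alpha a b k) (alpha a b (l - 1)))

theorem leibnizSum_self_eq_alpha (hab : a ≤ b) (ha : (a : ℕ) + k < n) (hb : n < (b : ℕ) + k) :
    leibnizSum a b k k = alpha a b k := by
  have hleft : sMul (alpha a b (k - 1)) (alpha a b k) = alpha a b (k - 1) :=
    sMul_alpha_alpha_eq_left _ ha hb.le
  have hright : sMul (alpha a b k) (alpha a b (k - 1)) = alpha a b k :=
    sMul_alpha_alpha_eq_left _ (by omega) (by omega)
  rw [leibnizSum, hleft, hright, sAdd_alpha_alpha hab, max_eq_right (k.sub_le 1)]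

theorem leibnizSum_self_eq_alpha_card (hab : a ≤ b) (hk : k ≤ n) (ha : n ≤ (a : ℕ) + k) :
    leibnizSum a b k k = alpha a b n := by
  obtain ⟨m, hm, hright⟩ := exists_sMul_alpha_alpha_eq_alpha hab hk (k - 1)
  rw [leibnizSum, sMul_alpha_alpha_eq_card hab _ ha, hright, sAdd_alpha_alpha hab,
    max_eq_left hm]

theorem exists_sMul_self_eq_alpha_eq_leibnizSum (hab : a ≤ b) (hk : k ≤ n)
    (hb : n < (b : ℕ) + k) :
    ∃ m, 0 < m ∧ m ≤ n ∧ sMul (alpha a b k) (alpha a b k) = alpha a b m ∧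
      leibnizSum a b k k = alpha a b m := by
  rcases lt_or_ge ((a : ℕ) + k) n with ha | ha
  · exact ⟨k, by omega, hk, sMul_alpha_alpha_eq_left k ha hb.le,
      leibnizSum_self_eq_alpha hab ha hb⟩
  · exact ⟨n, a.pos, le_rfl, sMul_alpha_alpha_eq_card hab k ha,
      leibnizSum_self_eq_alpha_card hab hk ha⟩

theorem alpha_pred_ne_leibnizSum_self (hab : a < b) (hk : k ≤ n) (hb : n < (b : ℕ) + k) {m : ℕ}
    (hm : m ≤ n) (hmul : sMul (alpha a b k) (alpha a b k) = alpha a b m) :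
    alpha a b (m - 1) ≠ leibnizSum a b k k := by
  obtain ⟨r, hr_pos, hr, hmul', hsum⟩ := exists_sMul_self_eq_alpha_eq_leibnizSum hab.le hk hb
  obtain rfl : m = r := alpha_injOn hab.ne hm hr (hmul.symm.trans hmul')
  rw [hsum]
  intro h
  have hfixed : m - 1 = m := alpha_injOn hab.ne ((m.sub_le 1).trans hm) hm h
  omega

theorem le_sub_of_leibniz_self (hab : a < b) (hk : k ≤ n)
    (hL : ∀ m ≤ n, sMul (alpha a b k) (alpha a b k) = alpha a b m →
      alpha a b (m - 1) = leibnizSum a b k k) :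
    k ≤ n - (b : ℕ) := by
  by_contra! hlt
  obtain ⟨m, hm, hmul⟩ := exists_sMul_alpha_alpha_eq_alpha hab.le hk k
  exact alpha_pred_ne_leibnizSum_self hab hk (by omega) hm hmul (hL m hm hmul)

end Leibniz

theorem stmt4_general (n : ℕ) (a b : Fin n) (hab : a < b) :
    (∀ k : ℕ, n - (b : ℕ) < k → k ≤ n → ∀ m ≤ n,
      sMul (alpha a b k) (alpha a b k) = alpha a b m →
      alpha a b (m - 1) ≠ leibnizSum a b k k) ∧
    (∀ K : Set ℕ, (∀ k ∈ K, k ≤ n) →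
      (∀ k ∈ K, ∀ ℓ ∈ K, ∀ m ≤ n, sMul (alpha a b k) (alpha a b ℓ) = alpha a b m →
        alpha a b (m - 1) = leibnizSum a b k ℓ) →
      ∀ k ∈ K, k ≤ n - (b : ℕ)) :=
  ⟨fun _ hk hkn _ hm hmul => alpha_pred_ne_leibnizSum_self hab hkn (by omega) hm hmul,
    fun K hK hL k hk => le_sub_of_leibniz_self hab (hK k hk) (hL k hk k hk)⟩

/-- For every `k` with `n − b < k ≤ n` the Leibniz identity fails
at `α_k` (with `D(α_k) = α_{k−1}` encoded by truncated subtraction), and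
consequently any subset of indices `K ⊆ {0,…,n}` containing `{0,…,n−b}` on
which `D` satisfies the Leibniz rule is contained in `{0,…,n−b}`, i.e.
`DS_{a,b}` is the maximal such subset of `STR{a,b}`. -/
theorem stmt4 (n : ℕ) (a b : Fin n) (hab : a < b) :
    -- failure of the Leibniz identity at α_k for n−b < k ≤ n
    (∀ k : ℕ, n - (b : ℕ) < k → k ≤ n → ∀ m ≤ n,
      sMul (alpha a b k) (alpha a b k) = alpha a b m →
      alpha a b (m - 1) ≠
        sAdd (sMul (alpha a b (k - 1)) (alpha a b k))
             (sMul (alpha a b k) (alpha a b (k - 1)))) ∧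
    -- maximality of DS_{a,b}
    (∀ K : Set ℕ, (∀ k ∈ K, k ≤ n) → (∀ k : ℕ, k ≤ n - (b : ℕ) → k ∈ K) →
      (∀ k ∈ K, ∀ ℓ ∈ K, ∀ m ≤ n,
        sMul (alpha a b k) (alpha a b ℓ) = alpha a b m →
        alpha a b (m - 1) =
          sAdd (sMul (alpha a b (k - 1)) (alpha a b ℓ))
               (sMul (alpha a b k) (alpha a b (ℓ - 1)))) →
      ∀ k ∈ K, k ≤ n - (b : ℕ)) :=
  ⟨(stmt4_general n a b hab).1, fun K hK _ hL => (stmt4_general n a b hab).2 K hK hL⟩
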